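/- Let D = diag(d₁²,…,dₙ²) with d₁² ≥ d₂² ≥ ⋯ ≥ dₙ² ≥ 0, let f ∈ 𝓤, and define 𝒥 : ℝ^{n×r} → ℝ by 𝒥(U) = Σ_{i=1}^{n} f(σᵢ), where σ₁,…,σₙ are the generalized eigenvalues of the pencil (U Uᵀ + I, D + I). If d₁² > d₂² > ⋯ > d_r² > d_{r+1}², then every global minimizer Û of 𝒥 satisfies Û Ûᵀ = Σ_{i=1}^{r} dᵢ² eᵢ eᵢᵀ, where e₁,…,eₙ are the standard basis vectors of ℝⁿ. -/

import Mathlib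

open Matrix Finset

/-- `σ` enumerates (with multiplicity) the generalized eigenvalues of the pencil `(A, B)`,
i.e. the eigenvalues of `B⁻¹ * A`. -/
def IsGenEigs {n : ℕ} (A B : Matrix (Fin n) (Fin n) ℝ) (σ : Fin n → ℝ) : Prop :=
  (B⁻¹ * A).charpoly = ∏ i : Fin n, (Polynomial.X - Polynomial.C (σ i))

/-- Membership in the class 𝓤. -/
def MemU (f : ℝ → ℝ) : Prop :=
  ∃ f' : ℝ → ℝ,
    (∀ x ∈ Set.Ioi (0:ℝ), HasDerivAt f (f' x) x) ∧
    ContinuousOn f' (Set.Ioi (0:ℝ)) ∧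
    (∀ x ∈ Set.Ioi (0:ℝ), x ≠ 1 → f' x * (1 - x) < 0) ∧
    Filter.Tendsto f Filter.atTop Filter.atTop

lemma aux_spec {n : ℕ} (M : Matrix (Fin n) (Fin n) ℝ) (hM : Mᵀ = M) :
    ∃ (Q : Matrix (Fin n) (Fin n) ℝ) (l : Fin n → ℝ), Monotone l ∧ Qᵀ * Q = 1 ∧ Q * Qᵀ = 1 ∧
      M = Q * Matrix.diagonal l * Qᵀ := by
  have hH : M.IsHermitian := by
    rw [Matrix.IsHermitian, Matrix.conjTranspose_eq_transpose_of_trivial, hM]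
  let W : Matrix (Fin n) (Fin n) ℝ := hH.eigenvectorUnitary
  have hW1 : Wᵀ * W = 1 := by
    have := Matrix.mem_unitaryGroup_iff'.1 hH.eigenvectorUnitary.2
    rwa [Matrix.star_eq_conjTranspose, Matrix.conjTranspose_eq_transpose_of_trivial] at this
  have hspec : M = W * Matrix.diagonal hH.eigenvalues * Wᵀ := by
    have := hH.spectral_theorem
    rw [Unitary.conjStarAlgAut_apply] at this
    rw [Matrix.star_eq_conjTranspose, Matrix.conjTranspose_eq_transpose_of_trivial] at this
    exact this
  let e := Tuple.sort hH.eigenvalues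
  refine ⟨W.submatrix id e, hH.eigenvalues ∘ e, Tuple.monotone_sort _, ?_, ?_, ?_⟩
  · rw [Matrix.transpose_submatrix, Matrix.submatrix_mul _ _ _ id _ Function.bijective_id |>.symm, hW1]
    simp
  · rw [Matrix.transpose_submatrix, Matrix.submatrix_mul _ _ _ e _ e.bijective |>.symm,
      mul_eq_one_comm.1 hW1]
    simp
  · have : Matrix.diagonal (hH.eigenvalues ∘ e) = (Matrix.diagonal hH.eigenvalues).submatrix e e := by
      simp
    rw [this, Matrix.transpose_submatrix, Matrix.submatrix_mul _ _ _ e _ e.bijective |>.symm,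
      Matrix.submatrix_mul _ _ _ e _ e.bijective |>.symm, ← hspec]
    simp

lemma aux_mul_transpose_zero {m k : ℕ} (A : Matrix (Fin m) (Fin k) ℝ) (h : A * Aᵀ = 0) : A = 0 := by
  have := Matrix.self_mul_conjTranspose_eq_zero (A := A)
  rw [Matrix.conjTranspose_eq_transpose_of_trivial] at this
  exact this.1 h

lemma aux_proj {n r : ℕ} (hr : r < n) (V : Matrix (Fin n) (Fin r) ℝ) :
    ∃ P : Matrix (Fin n) (Fin n) ℝ, Pᵀ = P ∧ P * P = P ∧ P * V = 0 ∧ P.trace = (n : ℝ) - r := by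
  obtain ⟨Q, m, -, h1, h2, h3⟩ := aux_spec (V * Vᵀ) (by simp)
  have hrank : (V * Vᵀ).rank ≤ r := by
    refine (Matrix.rank_mul_le_left _ _).trans ?_
    simpa using Matrix.rank_le_card_width V
  have hdiag : (Matrix.diagonal m).rank ≤ r := by
    have : Matrix.diagonal m = Qᵀ * (V * Vᵀ) * Q := by
      rw [h3]
      calc _ = (Qᵀ * Q) * Matrix.diagonal m * (Qᵀ * Q) := by rw [h1]; simp
        _ = _ := by simp only [Matrix.mul_assoc]
    rw [this]
    exact (Matrix.rank_mul_le_left _ _).trans ((Matrix.rank_mul_le_right _ _).trans hrank)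
  rw [Matrix.rank_diagonal, Fintype.card_subtype] at hdiag
  have hcard : n - r ≤ (univ.filter (fun i => m i = 0)).card := by
    have := Finset.card_filter_add_card_filter_not (s := (univ : Finset (Fin n))) (fun i => m i = 0)
    simp only [Finset.card_univ, Fintype.card_fin] at this
    have h' : (univ.filter (fun i => ¬ m i = 0)).card ≤ r := hdiag
    omega
  obtain ⟨T, hT, hTc⟩ := Finset.exists_subset_card_eq hcard
  let c : Fin n → ℝ := fun i => if i ∈ T then 1 else 0
  have hcc : Matrix.diagonal c * Matrix.diagonal c = Matrix.diagonal c := by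
    rw [Matrix.diagonal_mul_diagonal]; congr 1; ext i; simp [c]
  have hcm : Matrix.diagonal c * Matrix.diagonal m = 0 := by
    rw [Matrix.diagonal_mul_diagonal, ← Matrix.diagonal_zero]; congr 1; ext i
    by_cases hi : i ∈ T
    · have := hT hi; simp at this; simp [this]
    · simp [c, hi]
  have hsym : (Q * Matrix.diagonal c * Qᵀ)ᵀ = Q * Matrix.diagonal c * Qᵀ := by
    simp [Matrix.transpose_mul, Matrix.mul_assoc]
  refine ⟨Q * Matrix.diagonal c * Qᵀ, hsym, ?_, ?_, ?_⟩
  · calc _ = Q * Matrix.diagonal c * (Qᵀ * Q) * Matrix.diagonal c * Qᵀ := by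
          simp only [Matrix.mul_assoc]
      _ = Q * (Matrix.diagonal c * Matrix.diagonal c) * Qᵀ := by
          rw [h1]; simp only [Matrix.mul_assoc, Matrix.one_mul]
      _ = _ := by rw [hcc]
  · apply aux_mul_transpose_zero
    rw [Matrix.transpose_mul, hsym]
    calc _ = Q * Matrix.diagonal c * Qᵀ * (V * Vᵀ) * (Q * Matrix.diagonal c * Qᵀ) := by
          simp only [Matrix.mul_assoc]
      _ = Q * Matrix.diagonal c * (Qᵀ * Q) * Matrix.diagonal m * Qᵀ * (Q * Matrix.diagonal c * Qᵀ) := by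
          rw [h3]; simp only [Matrix.mul_assoc]
      _ = Q * (Matrix.diagonal c * Matrix.diagonal m) * Qᵀ * (Q * Matrix.diagonal c * Qᵀ) := by
          rw [h1]; simp only [Matrix.mul_assoc, Matrix.one_mul]
      _ = 0 := by rw [hcm]; simp
  · rw [Matrix.trace_mul_comm, ← Matrix.mul_assoc, h1, Matrix.one_mul, Matrix.trace_diagonal]
    simp only [c, Finset.sum_ite_mem, Finset.univ_inter, Finset.sum_const, hTc, nsmul_eq_mul, mul_one]
    rw [Nat.cast_sub hr.le]

lemma aux_idem_diag {n : ℕ} (P : Matrix (Fin n) (Fin n) ℝ) (hs : Pᵀ = P) (hi : P * P = P) (i : Fin n) :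
    P i i = ∑ j, P i j ^ 2 := by
  have h : (P * P) i i = P i i := by rw [hi]
  rw [Matrix.mul_apply] at h
  rw [← h]
  refine Finset.sum_congr rfl fun j _ => ?_
  have : P j i = P i j := congrFun (congrFun hs i) j
  rw [this, sq]

lemma aux_idem_bd {n : ℕ} (P : Matrix (Fin n) (Fin n) ℝ) (hs : Pᵀ = P) (hi : P * P = P) (i : Fin n) :
    0 ≤ P i i ∧ P i i ≤ 1 := by
  have h := aux_idem_diag P hs hi i
  have h2 : P i i ^ 2 ≤ ∑ j, P i j ^ 2 :=
    Finset.single_le_sum (f := fun j => P i j ^ 2) (fun j _ => sq_nonneg _) (Finset.mem_univ i)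
  rw [← h] at h2
  constructor <;> nlinarith

/-- off-diagonal entries vanish if the diagonal entry is 0 or 1 -/
lemma aux_idem_off {n : ℕ} (P : Matrix (Fin n) (Fin n) ℝ) (hs : Pᵀ = P) (hi : P * P = P) (i j : Fin n)
    (hij : i ≠ j) (h01 : P i i = 0 ∨ P i i = 1) : P i j = 0 := by
  have h := aux_idem_diag P hs hi i
  have h2 : P i i ^ 2 + P i j ^ 2 ≤ ∑ j, P i j ^ 2 := by
    rw [← Finset.sum_pair (f := fun j => P i j ^ 2) hij]
    exact Finset.sum_le_sum_of_subset_of_nonneg (Finset.subset_univ _) (fun j _ _ => sq_nonneg _)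
  rw [← h] at h2
  rcases h01 with h0 | h0 <;> rw [h0] at h2 <;> nlinarith [sq_nonneg (P i j)]

lemma aux_f_anti {f : ℝ → ℝ} (hf : MemU f) : StrictAntiOn f (Set.Ioc 0 1) := by
  obtain ⟨f', h1, -, h3, -⟩ := hf
  refine strictAntiOn_of_deriv_neg (convex_Ioc 0 1)
    (fun x hx => (h1 x hx.1).continuousAt.continuousWithinAt) ?_
  intro x hx
  rw [interior_Ioc] at hx
  rw [(h1 x hx.1).deriv]
  have := h3 x hx.1 hx.2.ne
  nlinarith [hx.2]

lemma aux_f_mono {f : ℝ → ℝ} (hf : MemU f) : StrictMonoOn f (Set.Ici 1) := by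
  obtain ⟨f', h1, -, h3, -⟩ := hf
  have hp : ∀ x : ℝ, 1 ≤ x → x ∈ Set.Ioi (0:ℝ) := fun x hx => lt_of_lt_of_le one_pos hx
  refine strictMonoOn_of_deriv_pos (convex_Ici 1)
    (fun x hx => (h1 x (hp x hx)).continuousAt.continuousWithinAt) ?_
  intro x hx
  rw [interior_Ici] at hx
  have hx' : 1 < x := hx
  rw [(h1 x (hp x hx'.le)).deriv]
  have := h3 x (hp x hx'.le) hx'.ne'
  nlinarith

lemma aux_f_one {f : ℝ → ℝ} (hf : MemU f) {x : ℝ} (hx : 0 < x) (hne : x ≠ 1) : f 1 < f x := by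
  rcases lt_or_gt_of_ne hne with h | h
  · exact aux_f_anti hf ⟨hx, h.le⟩ ⟨one_pos, le_rfl⟩ h
  · exact aux_f_mono hf (Set.mem_Ici.2 le_rfl) (Set.mem_Ici.2 h.le) h

/-- interlacing -/
lemma aux_interlace {n r : ℕ} (c : Fin n → ℝ) (hc : Monotone c) (V : Matrix (Fin n) (Fin r) ℝ)
    (Q : Matrix (Fin n) (Fin n) ℝ) (l : Fin n → ℝ) (hl : Monotone l) (h2 : Q * Qᵀ = 1)
    (h3 : Matrix.diagonal c + V * Vᵀ = Q * Matrix.diagonal l * Qᵀ)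
    (k k' : Fin n) (hk : (k' : ℕ) = k + r) : l k ≤ c k' := by
  let L : (Fin n → ℝ) →ₗ[ℝ] ({j : Fin n // j < k} → ℝ) × (Fin r → ℝ) × ({j : Fin n // k' < j} → ℝ) :=
    LinearMap.prod ((LinearMap.funLeft ℝ ℝ Subtype.val).comp (Matrix.mulVecLin Qᵀ))
      (LinearMap.prod (Matrix.mulVecLin Vᵀ) (LinearMap.funLeft ℝ ℝ Subtype.val))
  have hfin : Module.finrank ℝ (({j : Fin n // j < k} → ℝ) × (Fin r → ℝ) × ({j : Fin n // k' < j} → ℝ))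
      < Module.finrank ℝ (Fin n → ℝ) := by
    have e1 : Fintype.card {j : Fin n // j < k} = k := by
      rw [Fintype.card_subtype, Finset.filter_gt_eq_Iio, Fin.card_Iio]
    have e2 : Fintype.card {j : Fin n // k' < j} = n - 1 - k' := by
      rw [Fintype.card_subtype, Finset.filter_lt_eq_Ioi, Fin.card_Ioi]
    simp only [Module.finrank_prod, Module.finrank_fintype_fun_eq_card, Fintype.card_fin, e1, e2]
    have := k'.2
    omega
  have hker := LinearMap.ker_ne_bot_of_finrank_lt (f := L) hfin
  obtain ⟨x, hx, hx0⟩ := Submodule.exists_mem_ne_zero_of_ne_bot hker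
  rw [LinearMap.mem_ker] at hx
  have a1 : ∀ j : Fin n, j < k → (Qᵀ *ᵥ x) j = 0 := fun j hj =>
    congrFun (congrArg Prod.fst hx) ⟨j, hj⟩
  have a2 : Vᵀ *ᵥ x = 0 := congrArg (fun z => z.2.1) hx
  have a3 : ∀ j : Fin n, k' < j → x j = 0 := fun j hj =>
    congrFun (congrArg (fun z => z.2.2) hx) ⟨j, hj⟩
  set y := Qᵀ *ᵥ x with hy
  have hyy : y ⬝ᵥ y = x ⬝ᵥ x := by
    rw [hy, Matrix.dotProduct_mulVec, Matrix.vecMul_transpose, Matrix.mulVec_mulVec, h2,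
      Matrix.one_mulVec]
  have e1 : x ⬝ᵥ ((Matrix.diagonal c + V * Vᵀ) *ᵥ x) = ∑ i, c i * x i ^ 2 := by
    rw [Matrix.add_mulVec, ← Matrix.mulVec_mulVec, a2, Matrix.mulVec_zero, add_zero, dotProduct]
    refine Finset.sum_congr rfl fun i _ => ?_
    rw [Matrix.mulVec_diagonal]; ring
  have e2 : x ⬝ᵥ ((Matrix.diagonal c + V * Vᵀ) *ᵥ x) = ∑ i, l i * y i ^ 2 := by
    rw [h3, ← Matrix.mulVec_mulVec, ← Matrix.mulVec_mulVec, Matrix.dotProduct_mulVec,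
      ← Matrix.mulVec_transpose, ← hy, dotProduct]
    refine Finset.sum_congr rfl fun i _ => ?_
    rw [Matrix.mulVec_diagonal]; ring
  have i1 : ∑ i, c i * x i ^ 2 ≤ c k' * (x ⬝ᵥ x) := by
    rw [dotProduct, Finset.mul_sum]
    refine Finset.sum_le_sum fun i _ => ?_
    rcases lt_or_ge k' i with h | h
    · simp [a3 i h]
    · rw [← sq]; exact mul_le_mul_of_nonneg_right (hc h) (sq_nonneg _)
  have i2 : l k * (y ⬝ᵥ y) ≤ ∑ i, l i * y i ^ 2 := by
    rw [dotProduct, Finset.mul_sum]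
    refine Finset.sum_le_sum fun i _ => ?_
    rcases lt_or_ge i k with h | h
    · simp [a1 i h]
    · rw [← sq]; exact mul_le_mul_of_nonneg_right (hl h) (sq_nonneg _)
  have hpos : 0 < x ⬝ᵥ x := by
    have h0 : x ⬝ᵥ x ≠ 0 := fun h => hx0 (dotProduct_self_eq_zero.1 h)
    have h1 : 0 ≤ x ⬝ᵥ x := Finset.sum_nonneg fun i _ => mul_self_nonneg _
    exact lt_of_le_of_ne h1 h0.symm
  rw [hyy] at i2
  have : l k * (x ⬝ᵥ x) ≤ c k' * (x ⬝ᵥ x) := by linarith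
  exact le_of_mul_le_mul_right this hpos

/-- positivity of eigenvalues -/
lemma aux_pos {n r : ℕ} (c : Fin n → ℝ) (hc : ∀ i, 0 < c i) (V : Matrix (Fin n) (Fin r) ℝ)
    (Q : Matrix (Fin n) (Fin n) ℝ) (l : Fin n → ℝ) (h1 : Qᵀ * Q = 1)
    (h3 : Matrix.diagonal c + V * Vᵀ = Q * Matrix.diagonal l * Qᵀ) (k : Fin n) : 0 < l k := by
  have hd : Matrix.diagonal l = Qᵀ * Matrix.diagonal c * Q + (Qᵀ * V) * (Qᵀ * V)ᵀ := by
    calc _ = (Qᵀ * Q) * Matrix.diagonal l * (Qᵀ * Q) := by rw [h1]; simp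
      _ = Qᵀ * (Q * Matrix.diagonal l * Qᵀ) * Q := by simp only [Matrix.mul_assoc]
      _ = _ := by
        rw [← h3, Matrix.transpose_mul]
        simp only [Matrix.mul_add, Matrix.add_mul, Matrix.mul_assoc, Matrix.transpose_transpose]
  have hk : l k = ∑ i, Q i k ^ 2 * c i + ∑ j, (Qᵀ * V) k j ^ 2 := by
    have := congrFun (congrFun hd k) k
    rw [Matrix.diagonal_apply_eq, Matrix.add_apply, Matrix.mul_apply, Matrix.mul_apply] at this
    rw [this]
    congr 1
    · refine Finset.sum_congr rfl fun i _ => ?_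
      rw [Matrix.mul_diagonal, Matrix.transpose_apply]; ring
    · refine Finset.sum_congr rfl fun i _ => ?_
      rw [Matrix.transpose_apply]; ring
  have hq : ∑ i, Q i k ^ 2 = 1 := by
    have := congrFun (congrFun h1 k) k
    rw [Matrix.mul_apply, Matrix.one_apply_eq] at this
    rw [← this]
    refine Finset.sum_congr rfl fun i _ => ?_
    rw [Matrix.transpose_apply]; ring
  have h0 : 0 ≤ ∑ j, (Qᵀ * V) k j ^ 2 := Finset.sum_nonneg fun _ _ => sq_nonneg _
  have h4 : 0 < ∑ i, Q i k ^ 2 * c i := by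
    apply Finset.sum_pos'
    · intro i _; exact mul_nonneg (sq_nonneg _) (hc i).le
    · by_contra! h
      have : ∑ i, Q i k ^ 2 = 0 := Finset.sum_eq_zero fun i hi => by
        have := h i hi
        have h5 := sq_nonneg (Q i k)
        have h6 := hc i
        nlinarith
      linarith
  linarith

/-- The core linear algebra: spectrum determines `M`. -/
lemma aux_core {n r : ℕ} (hr : r < n) (c : Fin n → ℝ) (hc1 : ∀ i, c i ≤ 1) (hc : Monotone c)
    (hgap : ∀ i : Fin n, (i : ℕ) < r → c i < c ⟨r, hr⟩)
    (V : Matrix (Fin n) (Fin r) ℝ) (s : Fin n → ℝ)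
    (hs : s = fun i : Fin n => if (i : ℕ) < r then 1 else c i)
    (Q : Matrix (Fin n) (Fin n) ℝ) (h1 : Qᵀ * Q = 1) (h2 : Q * Qᵀ = 1)
    (h3 : Matrix.diagonal c + V * Vᵀ = Q * Matrix.diagonal s * Qᵀ) :
    Matrix.diagonal c + V * Vᵀ = Matrix.diagonal s := by
  obtain ⟨P, hPs, hPi, hPV, hPt⟩ := aux_proj hr V
  set R := Qᵀ * P * Q with hR
  have hRs : Rᵀ = R := by
    simp [hR, Matrix.transpose_mul, hPs, Matrix.mul_assoc]
  have hRi : R * R = R := by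
    calc _ = Qᵀ * P * (Q * Qᵀ) * P * Q := by simp only [hR, Matrix.mul_assoc]
      _ = Qᵀ * (P * P) * Q := by rw [h2]; simp only [Matrix.mul_assoc, Matrix.one_mul]
      _ = R := by rw [hPi]
  have hRt : R.trace = (n : ℝ) - r := by
    rw [hR, Matrix.trace_mul_comm, ← Matrix.mul_assoc, h2, Matrix.one_mul, hPt]
  have hcardlt : ((univ.filter fun i : Fin n => (i : ℕ) < r).card : ℝ) = r := by
    have : (univ.filter fun i : Fin n => (i : ℕ) < r) = Finset.Iio (⟨r, hr⟩ : Fin n) := by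
      ext i; simp [Fin.lt_def]
    rw [this, Fin.card_Iio]
  have hone : ∑ i : Fin n, (if (i : ℕ) < r then (0:ℝ) else 1) = (n : ℝ) - r := by
    have h : ∀ i : Fin n, (if (i : ℕ) < r then (0:ℝ) else 1) = 1 - (if (i : ℕ) < r then (1:ℝ) else 0) := by
      intro i; split_ifs <;> simp
    rw [Finset.sum_congr rfl fun i _ => h i, Finset.sum_sub_distrib, Finset.sum_boole, hcardlt]
    simp
  have hPtr : ∑ i, (P i i - (if (i : ℕ) < r then (0:ℝ) else 1)) = 0 := by
    rw [Finset.sum_sub_distrib, hone, ← hPt]; simp [Matrix.trace]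
  have hRtr : ∑ i, (R i i - (if (i : ℕ) < r then (0:ℝ) else 1)) = 0 := by
    rw [Finset.sum_sub_distrib, hone, ← hRt]; simp [Matrix.trace]
  have t1 : (P * (Matrix.diagonal c + V * Vᵀ)).trace = ∑ i, P i i * c i := by
    rw [Matrix.mul_add, ← Matrix.mul_assoc, hPV, Matrix.zero_mul, add_zero]
    simp [Matrix.trace, Matrix.mul_diagonal]
  have t2 : (P * (Matrix.diagonal c + V * Vᵀ)).trace = ∑ i, R i i * s i := by
    rw [h3, ← Matrix.mul_assoc, Matrix.trace_mul_comm, ← Matrix.mul_assoc, ← Matrix.mul_assoc, ← hR]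
    simp [Matrix.trace, Matrix.mul_diagonal]
  -- lower bound from R
  have lb : 0 ≤ ∑ i, (R i i - (if (i : ℕ) < r then (0:ℝ) else 1)) * s i := by
    have : ∑ i, (R i i - (if (i : ℕ) < r then (0:ℝ) else 1)) * s i
        = ∑ i, (R i i - (if (i : ℕ) < r then (0:ℝ) else 1)) * (s i - 1) := by
      simp only [mul_sub, mul_one, Finset.sum_sub_distrib] at hRtr ⊢
      linarith
    rw [this]
    refine Finset.sum_nonneg fun i _ => ?_
    obtain ⟨b0, b1⟩ := aux_idem_bd R hRs hRi i
    have := hc1 i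
    simp only [hs]
    split_ifs
    · simp
    · nlinarith
  have key : 0 ≤ ∑ i, (P i i - (if (i : ℕ) < r then (0:ℝ) else 1)) * (c i - c ⟨r, hr⟩) := by
    have e1 : ∑ i, (P i i - (if (i : ℕ) < r then (0:ℝ) else 1)) * (c i - c ⟨r, hr⟩)
        = ∑ i, (P i i - (if (i : ℕ) < r then (0:ℝ) else 1)) * c i := by
      rw [← sub_eq_zero, ← Finset.sum_sub_distrib]
      simp only [← mul_sub, sub_sub_cancel_left]
      rw [← Finset.sum_mul, hPtr, zero_mul]
    have e2 : ∑ i : Fin n, (if (i : ℕ) < r then (0:ℝ) else 1) * c i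
        = ∑ i : Fin n, (if (i : ℕ) < r then (0:ℝ) else 1) * s i := by
      refine Finset.sum_congr rfl fun i _ => ?_
      simp only [hs]; split_ifs <;> simp
    rw [e1]
    simp only [sub_mul, Finset.sum_sub_distrib] at lb ⊢
    rw [e2, ← t1, t2]; exact lb
  have term : ∀ i ∈ (univ : Finset (Fin n)),
      (P i i - (if (i : ℕ) < r then (0:ℝ) else 1)) * (c i - c ⟨r, hr⟩) ≤ 0 := by
    intro i _
    obtain ⟨b0, b1⟩ := aux_idem_bd P hPs hPi i
    split_ifs with h
    · have := hgap i h; nlinarith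
    · have : c ⟨r, hr⟩ ≤ c i := hc (by rw [Fin.le_def]; simpa using h)
      nlinarith
  have hz := (Finset.sum_eq_zero_iff_of_nonpos term).1 (le_antisymm (Finset.sum_nonpos term) key)
  have hP0 : ∀ i : Fin n, (i : ℕ) < r → P i i = 0 := by
    intro i hi
    have := hz i (Finset.mem_univ _)
    rw [if_pos hi, sub_zero] at this
    have hg := hgap i hi
    rcases mul_eq_zero.1 this with h | h
    · exact h
    · linarith
  have hP1 : ∀ i : Fin n, ¬ (i : ℕ) < r → P i i = 1 := by
    intro i hi
    have hle : ∀ i ∈ (univ : Finset (Fin n)), P i i - (if (i : ℕ) < r then (0:ℝ) else 1) ≤ 0 := by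
      intro i _
      split_ifs with h
      · rw [hP0 i h]; simp
      · linarith [(aux_idem_bd P hPs hPi i).2]
    have := (Finset.sum_eq_zero_iff_of_nonpos hle).1 hPtr i (Finset.mem_univ _)
    rw [if_neg hi] at this
    linarith
  have hV : ∀ i : Fin n, ¬ (i : ℕ) < r → ∀ j, V i j = 0 := by
    intro i hi j
    have := congrFun (congrFun hPV i) j
    rw [Matrix.mul_apply, Finset.sum_eq_single i] at this
    · simpa [hP1 i hi] using this
    · intro k _ hk
      rw [aux_idem_off P hPs hPi i k hk.symm (Or.inr (hP1 i hi)), zero_mul]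
    · simp
  -- now the trace argument
  set M := Matrix.diagonal c + V * Vᵀ with hM
  set N := M - Matrix.diagonal s with hN
  have hNs : Nᵀ = N := by simp [hN, hM]
  have hNz : ∀ i j : Fin n, ¬ (i : ℕ) < r → N i j = 0 := by
    intro i j hi
    have : (V * Vᵀ) i j = 0 := by
      rw [Matrix.mul_apply]
      exact Finset.sum_eq_zero fun k _ => by rw [hV i hi k, zero_mul]
    rw [hN, hM, Matrix.sub_apply, Matrix.add_apply, this, add_zero]
    by_cases hij : i = j
    · subst hij; simp [hs, hi]
    · simp [hij]
  have hSN : Matrix.diagonal s * N = N := by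
    ext i j
    rw [Matrix.diagonal_mul]
    by_cases hi : (i : ℕ) < r
    · simp [hs, hi]
    · rw [hNz i j hi, mul_zero]
  have hNS : N * Matrix.diagonal s = N := by
    have := congrArg Matrix.transpose hSN
    rwa [Matrix.transpose_mul, hNs, Matrix.diagonal_transpose] at this
  have hMN : M = Matrix.diagonal s + N := by simp [hN]
  have tr1 : M.trace = (Matrix.diagonal s).trace := by
    rw [h3, Matrix.trace_mul_comm, ← Matrix.mul_assoc, h1, Matrix.one_mul]
  have tr2 : (M * M).trace = (Matrix.diagonal s * Matrix.diagonal s).trace := by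
    have : M * M = Q * (Matrix.diagonal s * Matrix.diagonal s) * Qᵀ := by
      rw [h3]
      calc _ = Q * Matrix.diagonal s * (Qᵀ * Q) * Matrix.diagonal s * Qᵀ := by
            simp only [Matrix.mul_assoc]
        _ = _ := by rw [h1]; simp only [Matrix.mul_assoc, Matrix.one_mul]
    rw [this, Matrix.trace_mul_comm, ← Matrix.mul_assoc, h1, Matrix.one_mul]
  have trN : N.trace = 0 := by rw [hN, Matrix.trace_sub, tr1, sub_self]
  have trNN : (N * N).trace = 0 := by
    rw [hMN, Matrix.add_mul, Matrix.mul_add, Matrix.mul_add, hSN, hNS] at tr2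
    simp only [Matrix.trace_add, trN] at tr2
    linarith
  have hN0 : N = 0 := by
    have h := Matrix.trace_mul_conjTranspose_self_eq_zero_iff (A := N)
    rw [Matrix.conjTranspose_eq_transpose_of_trivial, hNs] at h
    exact h.1 trNN
  rw [hMN, hN0, add_zero]

theorem approximation_lemma_uniqueness
    (n r : ℕ) (hn : 0 < n) (hrpos : 0 < r) (hr : r < n)
    (dsq : Fin n → ℝ) (hd : ∀ i, 0 ≤ dsq i) (hord : Antitone dsq)
    (hstrict : ∀ i j : Fin n, i < j → (j : ℕ) ≤ r → dsq j < dsq i)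
    (f : ℝ → ℝ) (hf : MemU f) :
    ∀ Uhat : Matrix (Fin n) (Fin r) ℝ,
      (∀ U : Matrix (Fin n) (Fin r) ℝ, ∀ σ σ' : Fin n → ℝ,
        IsGenEigs (Uhat * Uhatᵀ + 1) (Matrix.diagonal dsq + 1) σ →
        IsGenEigs (U * Uᵀ + 1) (Matrix.diagonal dsq + 1) σ' →
        ∑ i, f (σ i) ≤ ∑ i, f (σ' i)) →
      Uhat * Uhatᵀ = ∑ i ∈ Finset.univ.filter (fun i : Fin n => (i : ℕ) < r),
        dsq i • vecMulVec (Pi.single i (1:ℝ)) (Pi.single i (1:ℝ)) := by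
  intro U hmin
  have : NeZero n := ⟨hn.ne'⟩
  let b : Fin n → ℝ := fun i => dsq i + 1
  have hb : ∀ i, 0 < b i := fun i => by have := hd i; simp only [b]; linarith
  let c : Fin n → ℝ := fun i => (b i)⁻¹
  have hcpos : ∀ i, 0 < c i := fun i => inv_pos.2 (hb i)
  have hc1 : ∀ i, c i ≤ 1 := fun i => inv_le_one_of_one_le₀ (by simp only [b]; linarith [hd i])
  have hc : Monotone c := fun i j hij => by
    apply inv_anti₀ (hb j); simp only [b]; linarith [hord hij]
  have hgap : ∀ i : Fin n, (i : ℕ) < r → c i < c ⟨r, hr⟩ := fun i hi => by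
    apply inv_strictAnti₀ (hb _)
    have := hstrict i ⟨r, hr⟩ hi le_rfl
    simp only [b]; linarith
  let t : Fin n → ℝ := fun i => (√(b i))⁻¹
  have htt : ∀ i, t i * t i = c i := fun i => by
    simp only [t, c]; rw [← mul_inv, Real.mul_self_sqrt (hb i).le]
  have htpos : ∀ i, 0 < t i := fun i => inv_pos.2 (Real.sqrt_pos.2 (hb i))
  have hB : (Matrix.diagonal dsq + 1 : Matrix (Fin n) (Fin n) ℝ) = Matrix.diagonal b := by
    rw [← Matrix.diagonal_one, Matrix.diagonal_add]
  have hBinv : (Matrix.diagonal dsq + 1 : Matrix (Fin n) (Fin n) ℝ)⁻¹ = Matrix.diagonal c := by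
    rw [hB]
    apply Matrix.inv_eq_right_inv
    rw [Matrix.diagonal_mul_diagonal, ← Matrix.diagonal_one]
    congr 1; ext i; exact mul_inv_cancel₀ (hb i).ne'
  have hTT : Matrix.diagonal t * Matrix.diagonal t = Matrix.diagonal c := by
    rw [Matrix.diagonal_mul_diagonal]; congr 1; ext i; exact htt i
  set V := Matrix.diagonal t * U with hV
  have hVV : V * Vᵀ = Matrix.diagonal t * (U * Uᵀ) * Matrix.diagonal t := by
    rw [hV, Matrix.transpose_mul, Matrix.diagonal_transpose]; simp only [Matrix.mul_assoc]
  obtain ⟨Q, l, hl, h1, h2, h3⟩ := aux_spec (Matrix.diagonal c + V * Vᵀ) (by simp)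
  have hgen : IsGenEigs (U * Uᵀ + 1) (Matrix.diagonal dsq + 1) l := by
    unfold IsGenEigs
    have e : Matrix.diagonal c + V * Vᵀ = Matrix.diagonal t * (U * Uᵀ + 1) * Matrix.diagonal t := by
      rw [hVV, Matrix.mul_add, Matrix.add_mul, Matrix.mul_one, hTT, add_comm]
    rw [hBinv, ← hTT, Matrix.mul_assoc, Matrix.charpoly_mul_comm, ← e, h3, Matrix.mul_assoc,
      Matrix.charpoly_mul_comm, Matrix.mul_assoc, h1, Matrix.mul_one, Matrix.charpoly_diagonal]
  let s : Fin n → ℝ := fun i : Fin n => if (i : ℕ) < r then 1 else c i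
  let U0 : Matrix (Fin n) (Fin r) ℝ := Matrix.of fun i j => if (i : ℕ) = j then √(dsq i) else 0
  have hU0 : U0 * U0ᵀ = Matrix.diagonal (fun i : Fin n => if (i : ℕ) < r then dsq i else 0) := by
    ext i j
    rw [Matrix.mul_apply]
    simp only [Matrix.transpose_apply, U0, Matrix.of_apply]
    by_cases hij : i = j
    · subst hij
      rw [Matrix.diagonal_apply_eq]
      split_ifs with h
      · rw [Finset.sum_eq_single (⟨i, h⟩ : Fin r)]
        · simp [Real.mul_self_sqrt (hd i)]
        · intro k _ hk
          rw [if_neg, zero_mul]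
          intro h'; exact hk (Fin.ext h'.symm)
        · simp
      · refine Finset.sum_eq_zero fun k _ => ?_
        rw [if_neg, zero_mul]
        have := k.2; omega
    · rw [Matrix.diagonal_apply_ne _ hij]
      refine Finset.sum_eq_zero fun k _ => ?_
      by_cases h : (i : ℕ) = k
      · rw [if_neg (c := (j : ℕ) = k), mul_zero]
        intro h'; exact hij (Fin.ext (h.trans h'.symm))
      · rw [if_neg h, zero_mul]
  have hgen0 : IsGenEigs (U0 * U0ᵀ + 1) (Matrix.diagonal dsq + 1) s := by
    unfold IsGenEigs
    rw [hBinv, hU0, ← Matrix.diagonal_one, Matrix.diagonal_add, Matrix.diagonal_mul_diagonal,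
      ← Matrix.charpoly_diagonal]
    congr 2; ext i
    simp only [s]
    split_ifs
    · exact inv_mul_cancel₀ (hb i).ne'
    · simp
  have hle := hmin U0 l s hgen hgen0
  let e : Fin n ≃ Fin n := Equiv.addRight (⟨r, hr⟩ : Fin n)
  have hlpos := aux_pos c hcpos V Q l h1 h3
  have hterm : ∀ k, f (s (e k)) ≤ f (l k) ∧ (f (s (e k)) = f (l k) → l k = s (e k)) := by
    intro k
    have hek : ((e k : Fin n) : ℕ) = (k + r) % n := by
      simp [e, Fin.val_add]
    by_cases hk : (k : ℕ) + r < n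
    · rw [Nat.mod_eq_of_lt hk] at hek
      have hs : s (e k) = c (e k) := by simp only [s]; rw [if_neg]; omega
      have hlk := aux_interlace c hc V Q l hl h2 h3 k (e k) hek
      rw [hs]
      have hanti := aux_f_anti hf
      have m1 : l k ∈ Set.Ioc (0:ℝ) 1 := ⟨hlpos k, hlk.trans (hc1 _)⟩
      have m2 : c (e k) ∈ Set.Ioc (0:ℝ) 1 := ⟨hcpos _, hc1 _⟩
      exact ⟨hanti.antitoneOn m1 m2 hlk, fun h => (hanti.injOn m2 m1 h).symm⟩
    · have hk' : (k + r) % n = k + r - n := by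
        rw [Nat.mod_eq_sub_mod (by omega), Nat.mod_eq_of_lt]; have := k.2; omega
      have hs : s (e k) = 1 := by
        simp only [s]; rw [if_pos]; have := k.2; omega
      rw [hs]
      by_cases h : l k = 1
      · simp [h]
      · have := aux_f_one hf (hlpos k) h
        exact ⟨this.le, fun h' => absurd h' this.ne⟩
  have hle' : ∑ i, f (l i) ≤ ∑ i, f (s (e i)) := by
    rw [Equiv.sum_comp e (fun i => f (s i))]; exact hle
  have heq := (Finset.sum_eq_sum_iff_of_le (fun k (_ : k ∈ univ) => (hterm k).1)).1
    (le_antisymm (Finset.sum_le_sum fun k _ => (hterm k).1) hle')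
  have hls : l = s ∘ e := funext fun k => (hterm k).2 (heq k (Finset.mem_univ _))
  have hlds : Matrix.diagonal l = (Matrix.diagonal s).submatrix e e := by rw [hls]; simp
  -- permute the columns of Q
  let Q' := Q.submatrix id e.symm
  have hsd : Matrix.diagonal s = (Matrix.diagonal l).submatrix e.symm e.symm := by
    rw [hlds]; simp
  have k1 : Q'ᵀ * Q' = 1 := by
    simp only [Q']
    rw [Matrix.transpose_submatrix, Matrix.submatrix_mul _ _ _ id _ Function.bijective_id |>.symm, h1]
    simp
  have k3 : Matrix.diagonal c + V * Vᵀ = Q' * Matrix.diagonal s * Q'ᵀ := by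
    simp only [Q']
    rw [hsd, Matrix.transpose_submatrix,
      Matrix.submatrix_mul _ _ _ e.symm _ e.symm.bijective |>.symm,
      Matrix.submatrix_mul _ _ _ e.symm _ e.symm.bijective |>.symm, ← h3]
    simp
  have hfinal := aux_core hr c hc1 hc hgap V s rfl Q' k1 (mul_eq_one_comm.1 k1) k3
  have hent : ∀ i j, t i * (U * Uᵀ) i j * t j = Matrix.diagonal s i j - Matrix.diagonal c i j := by
    intro i j
    rw [← hfinal, hVV, Matrix.add_apply, Matrix.mul_diagonal, Matrix.diagonal_mul]
    ring
  have hres : U * Uᵀ = Matrix.diagonal (fun i : Fin n => if (i : ℕ) < r then dsq i else 0) := by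
    ext i j
    have h := hent i j
    by_cases hij : i = j
    · subst hij
      simp only [Matrix.diagonal_apply_eq, s] at h ⊢
      have h' : c i * (U * Uᵀ) i i = (if (i : ℕ) < r then 1 else c i) - c i := by
        rw [← h, ← htt]; ring
      split_ifs with hi
      · rw [if_pos hi] at h'
        have hbc : b i * c i = 1 := mul_inv_cancel₀ (hb i).ne'
        have : (U * Uᵀ) i i = b i * (c i * (U * Uᵀ) i i) := by rw [← mul_assoc, hbc, one_mul]
        rw [this, h', mul_sub, hbc]; simp [b]
      · rw [if_neg hi, sub_self] at h'
        exact (mul_eq_zero.1 h').resolve_left (hcpos i).ne'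
    · rw [Matrix.diagonal_apply_ne _ hij, Matrix.diagonal_apply_ne _ hij, sub_zero] at h
      rw [Matrix.diagonal_apply_ne _ hij]
      have h' := (mul_eq_zero.1 h).resolve_right (htpos j).ne'
      exact (mul_eq_zero.1 h').resolve_left (htpos i).ne'
  rw [hres]
  ext i j
  rw [Matrix.sum_apply, Finset.sum_filter]
  rw [Finset.sum_eq_single i]
  · by_cases hij : i = j
    · subst hij; simp [vecMulVec_apply]
    · simp [vecMulVec_apply, hij, Pi.single_apply, Ne.symm hij]
  · intro k _ hk
    simp [vecMulVec_apply, Pi.single_apply, hk.symm]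
  · simp
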